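/- For all positive integers m and n, the set 𝔅(m,n) of badly approximable systems of m linear forms in n variables over ℒ has Hausdorff dimension exactly mn: dim_H(𝔅(m,n)) = mn. -/

import Mathlib

/-!
Common setup: the field `ℒ = 𝔽((X⁻¹))` of formal Laurent series with coefficients
in a finite field `𝔽` of `k` elements.  We realize `ℒ` as `LaurentSeries 𝔽`
(Hahn series over `ℤ`) in the variable `T = X⁻¹`, so that `X` corresponds to `T⁻¹`
and the polynomial ring `𝔽[X]` corresponds to series supported on nonpositive
exponents.  The absolute value of `x = Σ_{i ≤ N} a_i X^i` (with `a_N ≠ 0`) is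
`k^N`, i.e. `k^(-order x)` in terms of the `T`-adic order.
-/

open scoped Classical ENNReal NNReal
open MeasureTheory

noncomputable section

namespace FSBad

/-- The field `ℒ = 𝔽((X⁻¹))`. -/
abbrev L (𝔽 : Type) [Field 𝔽] : Type := LaurentSeries 𝔽

variable {𝔽 : Type} [Field 𝔽] [Fintype 𝔽]

/-- The absolute value `‖·‖` on `ℒ`: `‖x‖ = k^(deg_X x)`, `‖0‖ = 0`. -/
def lnorm (x : L 𝔽) : ℝ := if x = 0 then 0 else (Fintype.card 𝔽 : ℝ) ^ (-x.order)

/-- Membership in the polynomial ring `𝔽[X] ⊆ ℒ` (polynomials in `X = T⁻¹`). -/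
def IsPoly (x : L 𝔽) : Prop := ∀ i : ℤ, 0 < i → x.coeff i = 0

/-- The height (sup-norm) `‖·‖_∞` on `ℒ^ι`. -/
def vnorm {ι : Type*} (x : ι → L 𝔽) : ℝ := ⨆ i, lnorm (x i)

/-- The closed ball in `ℒ^ι` with centre `c` and radius `ρ`. -/
def vball {ι : Type*} (c : ι → L 𝔽) (ρ : ℝ) : Set (ι → L 𝔽) :=
  {x | vnorm (fun i => x i - c i) ≤ ρ}

/-- `m × n` matrices over `ℒ`, identified with `ℒ^(mn)`. -/
abbrev Mat (𝔽 : Type) [Field 𝔽] (m n : ℕ) : Type := Matrix (Fin m) (Fin n) (L 𝔽)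

/-- The height of a matrix, i.e. the sup-norm on `ℒ^(mn)`. -/
def mnorm {m n : ℕ} (A : Mat 𝔽 m n) : ℝ := ⨆ p : Fin m × Fin n, lnorm (A p.1 p.2)

/-- The closed ball in `ℒ^(mn)` with centre `c` and radius `ρ`. -/
def mball {m n : ℕ} (c : Mat 𝔽 m n) (ρ : ℝ) : Set (Mat 𝔽 m n) :=
  {A | mnorm (A - c) ≤ ρ}

/-- The distance `⟨x⟩` from `x ∈ ℒ^h` to the polynomial lattice `𝔽[X]^h`. -/
def latDist {h : ℕ} (x : Fin h → L 𝔽) : ℝ :=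
  sInf {r : ℝ | ∃ p : Fin h → L 𝔽, (∀ i, IsPoly (p i)) ∧ r = vnorm (fun i => x i - p i)}

/-- The set `𝔅(m,n)` of badly approximable systems of `m` linear forms in `n`
variables over `ℒ`. -/
def Bad (𝔽 : Type) [Field 𝔽] [Fintype 𝔽] (m n : ℕ) : Set (Mat 𝔽 m n) :=
  {A | ∃ K : ℝ, 0 < K ∧ ∀ q : Fin m → L 𝔽, (∀ i, IsPoly (q i)) → q ≠ 0 →
    latDist (Matrix.vecMul q A) ^ n > K / vnorm q ^ m}

/-- The Hausdorff `s`-measure of `E ⊆ ℒ^(mn)`, defined through countable covers by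
balls of radii `< δ`, letting `δ → 0` (the infimum over `δ`-covers is nonincreasing
in `δ`, so the limit is the supremum over `δ > 0`). -/
def hMeasure {m n : ℕ} (s : ℝ) (E : Set (Mat 𝔽 m n)) : ℝ≥0∞ :=
  ⨆ (δ : ℝ) (_ : 0 < δ),
    ⨅ (c : ℕ → Mat 𝔽 m n) (ρ : ℕ → ℝ) (_ : ∀ i, 0 < ρ i ∧ ρ i < δ)
      (_ : E ⊆ ⋃ i, mball (c i) (ρ i)), ∑' i, ENNReal.ofReal (ρ i ^ s)

/-- The Hausdorff dimension of `E ⊆ ℒ^(mn)`. -/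
def hdim {m n : ℕ} (E : Set (Mat 𝔽 m n)) : ℝ :=
  sInf {s : ℝ | 0 ≤ s ∧ hMeasure s E = 0}

/-! ### Schmidt `(α,β)`-games on `ℒ^(mn)` -/

/-- A formal ball: an element of `Ω = ℒ^(mn) × ℝ`. -/
structure FBall (𝔽 : Type) [Field 𝔽] (m n : ℕ) where
  /-- centre -/
  c : Mat 𝔽 m n
  /-- radius -/
  r : ℝ

/-- Formal inclusion of formal balls: `(c₁,ρ₁) ⊆ (c₂,ρ₂)` iff `ρ₁ + ‖c₁ - c₂‖_∞ ≤ ρ₂`. -/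
def FBall.ssub {m n : ℕ} (B₁ B₂ : FBall 𝔽 m n) : Prop :=
  B₁.r + mnorm (B₁.c - B₂.c) ≤ B₂.r

/-- The subset of `ℒ^(mn)` determined by a formal ball. -/
def FBall.toSet {m n : ℕ} (B : FBall 𝔽 m n) : Set (Mat 𝔽 m n) := mball B.c B.r

/-- A strategy for White: given the balls `B₁, …, B_{i+1}` chosen by Black so far,
produce White's next ball. -/
abbrev Strategy (𝔽 : Type) [Field 𝔽] (m n : ℕ) : Type :=
  (i : ℕ) → (Fin (i + 1) → FBall 𝔽 m n) → FBall 𝔽 m n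

/-- White's move at stage `i` when following strategy `str` against Black's balls `B`. -/
def wMove {m n : ℕ} (str : Strategy 𝔽 m n) (B : ℕ → FBall 𝔽 m n) (i : ℕ) : FBall 𝔽 m n :=
  str i fun j => B j.1

/-- Black's move `B_{j+2}` is legal (for parameter `β`): it is a formal subset of
White's ball `W_{j+1}` and has radius `β · ρ(W_{j+1})`. -/
def BlackOk {m n : ℕ} (β : ℝ) (str : Strategy 𝔽 m n) (B : ℕ → FBall 𝔽 m n) (j : ℕ) : Prop :=
  (B (j + 1)).ssub (wMove str B j) ∧ (B (j + 1)).r = β * (wMove str B j).r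

/-- White's move `W_{i+1}` is legal (for parameter `α`): it is a formal subset of
Black's ball `B_{i+1}` and has radius `α · ρ(B_{i+1})`. -/
def WhiteOk {m n : ℕ} (α : ℝ) (str : Strategy 𝔽 m n) (B : ℕ → FBall 𝔽 m n) (i : ℕ) : Prop :=
  (wMove str B i).ssub (B i) ∧ (wMove str B i).r = α * (B i).r

/-- `str` is a winning strategy for White in the `(α,β;S)`-game: against any
sequence of Black balls, White's moves are legal as long as Black has played
legally so far, and if the whole play is legal then the intersection of the
chosen balls is contained in `S`. -/
def WinningStrategy {m n : ℕ} (α β : ℝ) (S : Set (Mat 𝔽 m n)) (str : Strategy 𝔽 m n) : Prop :=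
  ∀ B : ℕ → FBall 𝔽 m n, 0 ≤ (B 0).r →
    (∀ i, (∀ j < i, BlackOk β str B j) → WhiteOk α str B i) ∧
    ((∀ j, BlackOk β str B j) → (⋂ i, (B i).toSet) ⊆ S)

/-- `S` is `(α,β)`-winning. -/
def IsWinningAB {m n : ℕ} (α β : ℝ) (S : Set (Mat 𝔽 m n)) : Prop :=
  ∃ str : Strategy 𝔽 m n, WinningStrategy α β S str

/-- `S` is `α`-winning. -/
def IsWinningA {m n : ℕ} (α : ℝ) (S : Set (Mat 𝔽 m n)) : Prop :=
  ∀ β : ℝ, 0 < β → β < 1 → IsWinningAB α β S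

/-- The winning dimension of `S` (a supremum of a set of reals, which is `0` by
convention when the set is empty). -/
def windim {m n : ℕ} (S : Set (Mat 𝔽 m n)) : ℝ :=
  sSup {α : ℝ | 0 < α ∧ α < 1 ∧ IsWinningA α S}

/-! ### The matrices `Ā`, `Ā^*` and the quantities `M_v`, `D_v`, `∇D_v` -/

/-- `Ā = [[A, I_m], [I_n, 0]]`. Rows are indexed by `Fin m ⊕ Fin n`
(coordinates `q_1, …, q_{m+n}`), columns by `Fin n ⊕ Fin m`. -/
def Abar {m n : ℕ} (A : Mat 𝔽 m n) : Matrix (Fin m ⊕ Fin n) (Fin n ⊕ Fin m) (L 𝔽) :=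
  Matrix.fromBlocks A 1 1 0

/-- `Ā^* = [[Aᵀ, I_n], [I_m, 0]]`. Rows are indexed by `Fin n ⊕ Fin m`,
columns by `Fin m ⊕ Fin n`. -/
def AbarStar {m n : ℕ} (A : Mat 𝔽 m n) : Matrix (Fin n ⊕ Fin m) (Fin m ⊕ Fin n) (L 𝔽) :=
  Matrix.fromBlocks A.transpose 1 1 0

/-- The standard bilinear form `x·y = Σ_i x_i y_i` on `ℒ^ι`. -/
def dotL {ι : Type*} [Fintype ι] (x y : ι → L 𝔽) : L 𝔽 := ∑ i, x i * y i

/-- Strictly increasing `v`-tuples `1 ≤ i_1 < ⋯ < i_v ≤ m`. -/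
def IncTuple (v m : ℕ) : Type := {f : Fin v → Fin m // StrictMono f}

/-- The vector `M_v(A) ∈ ℒ^(C(m,v)²)` of the determinants
`det (y_{i_r} · C_{j_s}(Ā^*))_{1 ≤ r,s ≤ v}` over all strictly increasing index
tuples.  (For `v = 0` every coordinate is an empty determinant, i.e. `1`.) -/
def MvVec {m n : ℕ} (y : Fin m → (Fin n ⊕ Fin m → L 𝔽)) (v : ℕ) (A : Mat 𝔽 m n) :
    IncTuple v m × IncTuple v m → L 𝔽 := fun p =>
  Matrix.det (Matrix.of fun r s : Fin v =>
    dotL (y (p.1.1 r)) fun t => AbarStar A t (Sum.inl (p.2.1 s)))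

/-- `‖M_v(A)‖_∞`. -/
def MvNorm {m n : ℕ} (y : Fin m → (Fin n ⊕ Fin m → L 𝔽)) (v : ℕ) (A : Mat 𝔽 m n) : ℝ :=
  vnorm (MvVec y v A)

/-- `M_v(K) = max_{A ∈ K} ‖M_v(A)‖_∞` for `K ⊆ ℒ^(mn)`. -/
def MvSet {m n : ℕ} (y : Fin m → (Fin n ⊕ Fin m → L 𝔽)) (v : ℕ) (K : Set (Mat 𝔽 m n)) : ℝ :=
  sSup {r : ℝ | ∃ A ∈ K, r = MvNorm y v A}

/-- `D_v(A) = det (y_h · C_l(Ā^*))_{1 ≤ h,l ≤ v}`. -/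
def Dv {m n : ℕ} (y : Fin m → (Fin n ⊕ Fin m → L 𝔽)) (v : ℕ) (hv : v ≤ m)
    (A : Mat 𝔽 m n) : L 𝔽 :=
  Matrix.det (Matrix.of fun h l : Fin v =>
    dotL (y (Fin.castLE hv h)) fun t => AbarStar A t (Sum.inl (Fin.castLE hv l)))

/-- The discrete gradient `∇D_v(A) ∈ ℒ^(mn)`, with coordinates
`D_v(A + E_{ij}) - D_v(A)`. -/
def gradDv {m n : ℕ} (y : Fin m → (Fin n ⊕ Fin m → L 𝔽)) (v : ℕ) (hv : v ≤ m)
    (A : Mat 𝔽 m n) : Fin m × Fin n → L 𝔽 := fun p =>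
  Dv y v hv (A + Matrix.single p.1 p.2 1) - Dv y v hv A

/-- `y_1, …, y_m ∈ ℒ^(m+n)` form an orthonormal system: `y_h · y_{h'} = δ_{h h'}`
and `‖t_1 y_1 + ⋯ + t_m y_m‖_∞ = max_h ‖t_h‖`. -/
def OrthoSystem {m n : ℕ} (y : Fin m → (Fin n ⊕ Fin m → L 𝔽)) : Prop :=
  (∀ h h', dotL (y h) (y h') = if h = h' then 1 else 0) ∧
  (∀ t : Fin m → L 𝔽, vnorm (fun r => ∑ h, t h * y h r) = ⨆ h, lnorm (t h))

/-! ### Distance functions, parallelepipeds and successive minima -/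

/-- The `j`-th successive minimum of a distance function `F` on `ℒ^N`: the infimum
of all `λ > 0` such that `{F < λ}` contains `j` linearly independent points of
`𝔽[X]^N`. -/
def succMin {N : ℕ} (F : (Fin N → L 𝔽) → ℝ) (j : ℕ) : ℝ :=
  sInf {lam : ℝ | 0 < lam ∧ ∃ v : Fin j → (Fin N → L 𝔽),
    (∀ r, ∀ i, IsPoly (v r i)) ∧ LinearIndependent (L 𝔽) v ∧ ∀ r, F (v r) < lam}

/-- The distance function `F_A(x) = max_j c_j⁻¹ ‖Σ_i x_i a_{ij}‖`. -/
def FA {N : ℕ} (A : Matrix (Fin N) (Fin N) (L 𝔽)) (c : Fin N → ℝ)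
    (x : Fin N → L 𝔽) : ℝ :=
  ⨆ j, (c j)⁻¹ * lnorm (∑ i, x i * A i j)

/-- The parallelepiped `P_A(λ) = {x ∈ ℒ^N : F_A(x) < λ}`. -/
def PA {N : ℕ} (A : Matrix (Fin N) (Fin N) (L 𝔽)) (c : Fin N → ℝ) (lam : ℝ) :
    Set (Fin N → L 𝔽) := {x | FA A c x < lam}

/-- The polar distance function `F_A^*(y) = sup_{x ≠ 0} ‖x·y‖ / F_A(x)`. -/
def FAstar {N : ℕ} (A : Matrix (Fin N) (Fin N) (L 𝔽)) (c : Fin N → ℝ)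
    (y : Fin N → L 𝔽) : ℝ :=
  ⨆ x : {x : Fin N → L 𝔽 // x ≠ 0}, lnorm (dotL x.1 y) / FA A c x.1

/-! ### Haar measure, characterized by translation invariance and normalization -/

/-- The Borel σ-algebra on `ℒ^N`, generated by the balls. -/
def vecSigma (𝔽 : Type) [Field 𝔽] [Fintype 𝔽] (N : ℕ) : MeasurableSpace (Fin N → L 𝔽) :=
  MeasurableSpace.generateFrom {s | ∃ c ρ, (0 : ℝ) < ρ ∧ s = vball c ρ}

/-- `μ` is the Haar measure on `ℒ^N`: translation invariant and normalized so that
the unit ball `I^N` has measure `1` (these properties determine it uniquely). -/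
def IsHaarVec {N : ℕ} (μ : @Measure (Fin N → L 𝔽) (vecSigma 𝔽 N)) : Prop :=
  (∀ (v : Fin N → L 𝔽) (s : Set (Fin N → L 𝔽)), μ ((fun x => x + v) ⁻¹' s) = μ s) ∧
  μ {x | ∀ i, lnorm (x i) < 1} = 1

/-- The Borel σ-algebra on `ℒ^(mn)`, generated by the balls. -/
def matSigma (𝔽 : Type) [Field 𝔽] [Fintype 𝔽] (m n : ℕ) : MeasurableSpace (Mat 𝔽 m n) :=
  MeasurableSpace.generateFrom {s | ∃ c ρ, (0 : ℝ) < ρ ∧ s = mball c ρ}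

/-- `μ` is the Haar measure on `ℒ^(mn)`: translation invariant and normalized so
that the unit ball `I^(mn)` has measure `1`. -/
def IsHaarMat {m n : ℕ} (μ : @Measure (Mat 𝔽 m n) (matSigma 𝔽 m n)) : Prop :=
  (∀ (v : Mat 𝔽 m n) (s : Set (Mat 𝔽 m n)), μ ((fun x => x + v) ⁻¹' s) = μ s) ∧
  μ {A | ∀ i j, lnorm (A i j) < 1} = 1

/-! ### The constants of Section 3 -/

/-- `τ = m/(m+n)`. -/
def tau (m n : ℕ) : ℝ := m / (m + n)

/-- `δ = R^(-m(m+n)²)`. -/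
def del (R : ℝ) (m n : ℕ) : ℝ := R ^ (-((m : ℝ) * ((m : ℝ) + n) ^ 2))

/-- `δ* = R^(-n(m+n)²)`. -/
def delStar (R : ℝ) (m n : ℕ) : ℝ := R ^ (-((n : ℝ) * ((m : ℝ) + n) ^ 2))

def dig {F : Type} [Field F] {m n d : ℕ} (q : Fin d → Fin m → F)
    (a : ℕ → Fin m → Fin n → F) (l : ℕ) (ν : Fin n) : F :=
  ∑ j : Fin d, ∑ i, q j i * a (j + l) i ν

def Gd {F : Type} [Field F] {m n : ℕ} (c u : ℕ) (a : ℕ → Fin m → Fin n → F) : Prop :=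
  ∀ q : Fin (n * u) → Fin m → F, (∀ l < m * u + c, ∀ ν, dig q a l ν = 0) → q = 0

theorem Gd_congr {F : Type} [Field F] {m n c u : ℕ} {a b : ℕ → Fin m → Fin n → F}
    (h : ∀ l < (m + n) * u + c, a l = b l) (ha : Gd c u a) : Gd c u b := by
  intro q hq
  apply ha q
  intro l hl ν
  rw [← hq l hl ν]
  unfold dig
  refine Finset.sum_congr rfl fun j _ => Finset.sum_congr rfl fun i _ => ?_
  rw [h]
  have := j.2
  nlinarith

/-- block Hankel matrix -/
def Hk {F : Type} [Field F] {m n : ℕ} (a : ℕ → Fin m → Fin n → F) (r s : ℕ) :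
    Matrix (Fin r × Fin m) (Fin s × Fin n) F :=
  Matrix.of fun x y => a (x.1 + y.1) x.2 y.2

/-- dimension of the right kernel -/
def rk {F : Type} [Field F] {m n : ℕ} (a : ℕ → Fin m → Fin n → F) (r s : ℕ) : ℕ :=
  Module.finrank F (LinearMap.ker (Hk a r s).mulVecLin)

theorem rk_add_rank {F : Type} [Field F] {m n : ℕ} (a : ℕ → Fin m → Fin n → F) (r s : ℕ) :
    (Hk a r s).rank + rk a r s = n * s := by
  have := LinearMap.finrank_range_add_finrank_ker (Hk a r s).mulVecLin
  rw [Module.finrank_fintype_fun_eq_card] at this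
  simp at this
  rw [mul_comm n s, ← this]; rfl

theorem dig_eq {F : Type} [Field F] {m n : ℕ} (a : ℕ → Fin m → Fin n → F) (r s : ℕ)
    (q : Fin r → Fin m → F) (y : Fin s × Fin n) :
    dig q a y.1 y.2 = ((Hk a r s).transpose.mulVecLin (fun x => q x.1 x.2)) y := by
  simp [dig, Hk, Matrix.vecMul, dotProduct, Fintype.sum_prod_type]

theorem card_left {F : Type} [Field F] [Fintype F] {m n : ℕ} (a : ℕ → Fin m → Fin n → F)
    (r s : ℕ) :
    Nat.card {q : Fin r → Fin m → F // ∀ l < s, ∀ ν, dig q a l ν = 0} *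
      Fintype.card F ^ (n * s) = Fintype.card F ^ (m * r + rk a r s) := by
  have e : {q : Fin r → Fin m → F // ∀ l < s, ∀ ν, dig q a l ν = 0} ≃
      LinearMap.ker (Hk a r s).transpose.mulVecLin := by
    refine (Equiv.curry (Fin r) (Fin m) F).symm.subtypeEquiv ?_
    intro q
    rw [LinearMap.mem_ker, funext_iff]
    constructor
    · intro h y
      have := dig_eq a r s q y
      rw [h _ y.1.2] at this
      exact this.symm
    · intro h l hl ν
      have := dig_eq a r s q (⟨l, hl⟩, ν)
      rw [this]; exact h _
  rw [Nat.card_congr e, Module.natCard_eq_pow_finrank (K := F), Nat.card_eq_fintype_card,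
    ← pow_add]
  congr 1
  have h1 := LinearMap.finrank_range_add_finrank_ker (Hk a r s).transpose.mulVecLin
  rw [Module.finrank_fintype_fun_eq_card, Fintype.card_prod, Fintype.card_fin,
    Fintype.card_fin] at h1
  have h2 := rk_add_rank a r s
  rw [← Matrix.rank_transpose] at h2
  have h3 : Module.finrank F (LinearMap.range (Hk a r s).transpose.mulVecLin)
    = (Hk a r s).transpose.rank := rfl
  rw [mul_comm m r]
  omega

theorem rk_of_Gd {F : Type} [Field F] [Fintype F] {m n c u : ℕ} {a : ℕ → Fin m → Fin n → F}
    (ha : Gd c u a) : rk a (n * u) (m * u + c) = n * c := by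
  have h := card_left a (n * u) (m * u + c)
  have : Nat.card {q : Fin (n * u) → Fin m → F // ∀ l < (m * u + c), ∀ ν, dig q a l ν = 0} = 1 := by
    rw [Nat.card_eq_one_iff_exists]
    refine ⟨⟨0, by intros; simp [dig]⟩, ?_⟩
    rintro ⟨q, hq⟩
    simp [ha q hq]
  rw [this, one_mul] at h
  have := Nat.pow_right_injective (Fintype.one_lt_card (α := F)) h
  nlinarith

/-- shift map -/
def shf {F : Type} [Field F] {n s S : ℕ} (e : ℕ) : (Fin s × Fin n → F) →ₗ[F] (Fin S × Fin n → F) where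
  toFun w := fun y => if h : e ≤ y.1 ∧ y.1 - e < s then w (⟨y.1 - e, h.2⟩, y.2) else 0
  map_add' := by intro x y; ext z; simp; split_ifs <;> simp
  map_smul' := by intro x y; ext z; simp

theorem shf_mem {F : Type} [Field F] {m n s S r R e : ℕ} (a : ℕ → Fin m → Fin n → F)
    (hs : s + e ≤ S) (hr : r + e ≤ R) (w : Fin s × Fin n → F)
    (hw : w ∈ LinearMap.ker (Hk a R s).mulVecLin) :
    (shf e w : Fin S × Fin n → F) ∈ LinearMap.ker (Hk a r S).mulVecLin := by
  rw [LinearMap.mem_ker, funext_iff] at *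
  rintro ⟨j, i⟩
  have := hw (⟨j + e, by omega⟩, i)
  simp only [Matrix.mulVecLin_apply, Matrix.mulVec, dotProduct, Hk, Matrix.of_apply,
    Fintype.sum_prod_type, Pi.zero_apply] at this ⊢
  rw [← this]
  symm
  apply Finset.sum_of_injOn (fun x : Fin s => (⟨x + e, by omega⟩ : Fin S))
  · intro x _ y _ h
    simp at h
    ext; omega
  · simp
  · intro y _ hy
    apply Finset.sum_eq_zero
    intro ν _
    have : ¬ (e ≤ (y:ℕ) ∧ (y:ℕ) - e < s) := by
      intro h
      apply hy
      refine ⟨⟨y - e, h.2⟩, by simp, ?_⟩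
      ext; simp; omega
    simp [shf, this]
  · intro x _
    apply Finset.sum_congr rfl
    intro ν _
    simp [shf, add_assoc, add_comm e]

theorem rk_mono {F : Type} [Field F] {m n : ℕ} (a : ℕ → Fin m → Fin n → F) {r R s S : ℕ}
    (hs : s ≤ S) (hr : r ≤ R) : rk a R s ≤ rk a r S := by
  let f : LinearMap.ker (Hk a R s).mulVecLin →ₗ[F] LinearMap.ker (Hk a r S).mulVecLin :=
    LinearMap.restrict (shf 0) (fun w hw => shf_mem a (e := 0) hs hr w hw)
  apply LinearMap.finrank_le_finrank_of_injective (f := f)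
  rw [← LinearMap.ker_eq_bot, LinearMap.ker_eq_bot']
  rintro ⟨w, hw⟩ h
  ext ⟨y, ν⟩
  have := congrFun (congrArg Subtype.val h) (⟨y, by omega⟩, ν)
  simpa [f, LinearMap.restrict, shf] using this

theorem rk_zero {F : Type} [Field F] {m n : ℕ} (a : ℕ → Fin m → Fin n → F) {r R s S i : ℕ}
    (hs : s + i ≤ S) (hr : r + i ≤ R) (hi : rk a r S ≤ i) : rk a R s = 0 := by
  by_contra h0
  have : LinearMap.ker (Hk a R s).mulVecLin ≠ ⊥ := by
    intro h
    apply h0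
    unfold rk
    rw [h, finrank_bot]
  obtain ⟨w, hw, hw0⟩ := Submodule.exists_mem_ne_zero_of_ne_bot this
  have hex : ∃ y : ℕ, ∃ h : y < s, ∃ ν, w (⟨y, h⟩, ν) ≠ 0 := by
    by_contra hcon
    push Not at hcon
    apply hw0
    ext ⟨y, ν⟩
    exact hcon y y.2 ν
  obtain ⟨hys, ν, hν⟩ := Nat.find_spec hex
  have hmin := fun z => Nat.find_min hex (m := z)
  set y0 := Nat.find hex
  let v : Fin (i + 1) → LinearMap.ker (Hk a r S).mulVecLin :=
    fun e => ⟨shf e w, shf_mem a (by omega) (by omega) w hw⟩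
  have hv : LinearIndependent F v := by
    rw [Fintype.linearIndependent_iff]
    intro g hg
    have key : ∀ e : ℕ, ∀ he : e < i + 1, g ⟨e, he⟩ = 0 := by
      intro e
      induction e using Nat.strong_induction_on with
      | _ e ih =>
        intro he
        have h1 := congrFun (congrArg Subtype.val hg) (⟨y0 + e, by omega⟩, ν)
        simp [v] at h1
        rw [Finset.sum_eq_single ⟨e, he⟩] at h1
        · have h2 : g ⟨e, he⟩ = 0 ∨ w (⟨y0, hys⟩, ν) = 0 := by simpa [shf, hys] using h1
          exact h2.resolve_right hν
        · intro b _ hb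
          rcases lt_or_gt_of_ne (fun h => hb (Fin.ext h) : (b : ℕ) ≠ e) with h | h
          · rw [ih b h b.2]; simp
          · simp only [shf, LinearMap.coe_mk, AddHom.coe_mk]
            split_ifs with hc
            · have := hmin (y0 + e - b) (by omega)
              push Not at this
              rw [this hc.2]; simp
            · simp
        · simp
    exact fun e => key e e.2
  have := hv.fintype_card_le_finrank
  simp at this
  unfold rk at hi
  omega

/-- extension of the first `N` digits of `a` by a block `b` -/
def xt {F : Type} [Field F] {m n M : ℕ} (a : ℕ → Fin m → Fin n → F) (N : ℕ)
    (b : Fin M → Fin m → Fin n → F) : ℕ → Fin m → Fin n → F :=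
  fun l => if l < N then a l else if h : l - N < M then b ⟨l - N, h⟩ else 0

theorem xt_lt {F : Type} [Field F] {m n M : ℕ} (a : ℕ → Fin m → Fin n → F) {N l : ℕ}
    (b : Fin M → Fin m → Fin n → F) (h : l < N) : xt a N b l = a l := by simp [xt, h]

def plc {F : Type} [Field F] {n e : ℕ} (v : Fin e → Fin n → F) (o p : ℕ) : Fin n → F :=
  if h : o ≤ p ∧ p - o < e then v ⟨p - o, h.2⟩ else 0

theorem prob {F : Type} [Field F] [Fintype F] {m n M : ℕ} (a : ℕ → Fin m → Fin n → F)
    {N d lo hi : ℕ} (q : Fin (d + 1) → Fin m → F) (hq : q (Fin.last d) ≠ 0)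
    (h1 : N ≤ d + lo) (h2 : d + hi ≤ N + M) :
    Nat.card {b : Fin M → Fin m → Fin n → F // ∀ l < hi, ∀ ν, dig q (xt a N b) l ν = 0} *
      Fintype.card F ^ (n * (hi - lo)) ≤ Fintype.card F ^ (m * n * M) := by
  obtain ⟨i0, hi0⟩ := Function.ne_iff.1 hq
  let S := {b : Fin M → Fin m → Fin n → F // ∀ l < hi, ∀ ν, dig q (xt a N b) l ν = 0}
  let f : S × (Fin (hi - lo) → Fin n → F) → (Fin M → Fin m → Fin n → F) :=
    fun x p i ν => x.1.1 p i ν + if i = i0 then plc x.2 (d + lo) (N + p) ν else 0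
  have hf : Function.Injective f := by
    rintro ⟨⟨b, hb⟩, v⟩ ⟨⟨b', hb'⟩, v'⟩ h
    have hE : ∀ p i ν, b p i ν - b' p i ν =
        if i = i0 then plc v' (d + lo) (N + p) ν - plc v (d + lo) (N + p) ν else 0 := by
      intro p i ν
      have := congrFun (congrFun (congrFun h p) i) ν
      simp only [f] at this
      split_ifs with hi
      · simp only [hi, if_true] at this ⊢
        linear_combination this
      · simp only [hi, if_false] at this
        linear_combination this
    have key : ∀ e, ∀ he : e < hi - lo, v ⟨e, he⟩ = v' ⟨e, he⟩ := by
      intro e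
      induction e using Nat.strong_induction_on with
      | _ e ih =>
        intro he
        ext ν
        have e1 := hb (lo + e) (by omega) ν
        have e2 := hb' (lo + e) (by omega) ν
        have e3 : dig q (xt a N b) (lo + e) ν - dig q (xt a N b') (lo + e) ν = 0 := by
          rw [e1, e2, sub_zero]
        unfold dig at e3
        rw [← Finset.sum_sub_distrib, Fin.sum_univ_castSucc, Finset.sum_eq_zero, zero_add,
          ← Finset.sum_sub_distrib, Finset.sum_eq_single i0] at e3
        · rw [← mul_sub] at e3
          have e4 := (mul_eq_zero.1 e3).resolve_left hi0
          have hp : d + (lo + e) - N < M := by omega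
          have e5 := hE ⟨d + (lo + e) - N, hp⟩ i0 ν
          have hn1 : ¬ (d + (lo + e) < N) := by omega
          have hn2 : N + (d + (lo + e) - N) = d + lo + e := by omega
          simp only [xt, Fin.val_last, hn1, if_false, hp, dif_pos] at e4
          rw [e4] at e5
          simp [plc, hn2, he] at e5
          exact (sub_eq_zero.1 e5.symm).symm
        · intro i _ hi'
          rw [← mul_sub]
          have hp : d + (lo + e) - N < M := by omega
          have e5 := hE ⟨d + (lo + e) - N, hp⟩ i ν
          have hn1 : ¬ (d + (lo + e) < N) := by omega
          simp only [xt, Fin.val_last, hn1, if_false, hp, dif_pos]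
          rw [e5]; simp [hi']
        · simp
        · intro j _
          rw [← Finset.sum_sub_distrib]
          apply Finset.sum_eq_zero
          intro i _
          rw [← mul_sub]
          have : xt a N b (j + (lo + e)) i ν - xt a N b' (j + (lo + e)) i ν = 0 := by
            unfold xt
            split_ifs with g1 g2
            · simp
            · rw [hE]
              split_ifs with g3
              · unfold plc
                have : N + ((j : ℕ) + (lo + e) - N) = j + (lo + e) := by omega
                simp only [this]
                have hj := j.2
                split_ifs with g4
                · rw [ih _ (by omega)]; simp
                · simp
              · rfl
            · simp
          rw [Fin.val_castSucc, this, mul_zero]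
    have hv : v = v' := by ext1 e; exact key e e.2
    subst hv
    have hbb : b = b' := by
      ext p i ν
      have := hE p i ν
      simp at this
      exact sub_eq_zero.1 this
    subst hbb
    rfl
  have := Nat.card_le_card_of_injective f hf
  rw [Nat.card_prod] at this
  simp only [Nat.card_eq_fintype_card (α := Fin (hi - lo) → Fin n → F),
    Nat.card_eq_fintype_card (α := Fin M → Fin m → Fin n → F), Fintype.card_fun,
    Fintype.card_fin] at this
  rw [← pow_mul, ← pow_mul, ← pow_mul] at this
  rw [mul_comm m n, mul_assoc n m]
  exact this

theorem dig_restrict {F : Type} [Field F] {m n r r' : ℕ} (h : r ≤ r') (q : Fin r' → Fin m → F)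
    (hq : ∀ j : Fin r', r ≤ j → q j = 0) (a : ℕ → Fin m → Fin n → F) (l : ℕ) (ν : Fin n) :
    dig (fun j => q (Fin.castLE h j)) a l ν = dig q a l ν := by
  unfold dig
  apply Finset.sum_of_injOn (Fin.castLE h)
  · intro x _ y _ hxy; simpa using hxy
  · simp
  · intro y _ hy
    have : r ≤ y := by
      by_contra hc
      apply hy
      exact ⟨⟨y, by omega⟩, by simp, by ext; simp⟩
    simp [hq y this]
  · intro x _; simp

theorem dig_congr {F : Type} [Field F] {m n r l : ℕ} (q : Fin r → Fin m → F)
    {a b : ℕ → Fin m → Fin n → F} (h : ∀ p < r + l, a p = b p) (ν : Fin n)  :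
    dig q a l ν = dig q b l ν := by
  unfold dig
  refine Finset.sum_congr rfl fun j _ => Finset.sum_congr rfl fun i _ => ?_
  rw [h _ (by omega)]

theorem bad_exists {F : Type} [Field F] {m n u t M c : ℕ}
    {a : ℕ → Fin m → Fin n → F} (ha : Gd c u a) (b : Fin M → Fin m → Fin n → F)
    (hb : ¬ Gd c (u + t) (xt a ((m + n) * u + c) b)) :
    ∃ j < n * t, ∃ q : Fin (n * u + j + 1) → Fin m → F, 
      (∀ l < m * u + c - j, ∀ ν, dig q a l ν = 0) ∧ q (Fin.last _) ≠ 0 ∧ 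
      ∀ l < m * (u + t) + c, ∀ ν, dig q (xt a ((m + n) * u + c) b) l ν = 0 := by
  unfold Gd at hb
  push Not at hb
  obtain ⟨q, hq, hq0⟩ := hb
  obtain ⟨d0, hd0⟩ := Function.ne_iff.1 hq0
  have hN : (m + n) * u + c = n * u + (m * u + c) := by ring
  have hex : (Finset.univ.filter fun d : Fin (n * (u + t)) => q d ≠ 0).Nonempty :=
    ⟨d0, by simpa using hd0⟩
  obtain ⟨d, hd, hmax⟩ := Finset.exists_max_image _ (fun d => d) hex
  simp only [Finset.mem_filter, Finset.mem_univ, true_and] at hd hmax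
  have hz : ∀ e : Fin (n * (u + t)), d < e → q e = 0 := by
    intro e he
    by_contra h
    exact absurd (hmax e h) (not_le.2 he)
  have hdn : n * u ≤ d := by
    by_contra hlt
    have hle : n * u ≤ n * (u + t) := by nlinarith
    have hz' : ∀ j : Fin (n * (u + t)), n * u ≤ j → q j = 0 := fun j hj => hz j (by
      rw [Fin.lt_def]; omega)
    have := ha (fun j => q (Fin.castLE hle j)) (by
      intro l hl ν
      rw [dig_congr (b := xt a ((m + n) * u + c) b), dig_restrict hle q hz', hq]
      · nlinarith
      · intro p hp
        rw [xt_lt]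
        omega)
    have h3 := congrFun this ⟨d, by omega⟩
    exact hd h3
  obtain ⟨j, hj⟩ := Nat.exists_eq_add_of_le hdn
  have hdl := d.2
  have hexp : n * (u + t) = n * u + n * t := by ring
  have hle : n * u + j + 1 ≤ n * (u + t) := by omega
  have hz' : ∀ e : Fin (n * (u + t)), n * u + j + 1 ≤ e → q e = 0 := fun e he => hz e (by
      rw [Fin.lt_def]; omega)
  have hfull : ∀ l < m * (u + t) + c, ∀ ν, dig (fun e => q (Fin.castLE hle e))
      (xt a ((m + n) * u + c) b) l ν = 0 := by
    intro l hl ν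
    rw [dig_restrict hle q hz']
    exact hq l hl ν
  refine ⟨j, by omega, fun e => q (Fin.castLE hle e), ?_, ?_, hfull⟩
  · intro l hl ν
    rw [dig_congr (b := xt a ((m + n) * u + c) b)]
    · apply hfull
      have : m * (u + t) = m * u + m * t := by ring
      omega
    · intro p hp
      rw [xt_lt]
      omega
  · have : Fin.castLE hle (Fin.last (n * u + j)) = d := by ext; simp [hj]
    show q (Fin.castLE hle (Fin.last (n * u + j))) ≠ 0
    rw [this]; exact hd

theorem geo {k m : ℕ} (hk : 2 ≤ k) (hm : 0 < m) (N : ℕ) :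
    ∑ j ∈ Finset.range N, k ^ (m * (j + 1)) ≤ 2 * k ^ (m * N) := by
  induction N with
  | zero => simp
  | succ N ih =>
    rw [Finset.sum_range_succ]
    have h1 : k ^ (m * (N + 1)) = k ^ (m * N) * k ^ m := by rw [← pow_add]; ring_nf
    have h2 : 2 ≤ k ^ m := hk.trans (Nat.le_self_pow hm.ne' k)
    have h3 : 2 * k ^ (m * N) ≤ k ^ (m * (N + 1)) := by
      rw [h1, mul_comm]; exact Nat.mul_le_mul_left _ h2
    omega

theorem sum_bd {k m n t : ℕ} (hk : 2 ≤ k) (hm : 0 < m) (hn : 0 < n) (ht : 6 ≤ t) (w : ℕ → ℕ)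
    (hw : ∀ j, w j ≤ n * 3) (hw0 : ∀ j, n * 3 ≤ j → w j = 0) :
    2 * ∑ j ∈ Finset.range (n * t), k ^ (m * (j + 1) + w j) ≤ k ^ (m * (n * t) + n * 3) := by
  have hle : n * 3 ≤ n * t := Nat.mul_le_mul_left _ (by omega)
  have h1 : ∑ j ∈ Finset.range (n * t), k ^ (m * (j + 1) + w j) ≤
      ∑ j ∈ Finset.range (n * t), k ^ (m * (j + 1)) +
      ∑ j ∈ Finset.range (n * 3), k ^ (m * (j + 1)) * k ^ (n * 3) := by
    rw [← Finset.sum_sdiff (Finset.range_subset_range.2 hle), add_comm]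
    rw [add_comm]
    apply add_le_add
    · apply (Finset.sum_le_sum _).trans (Finset.sum_le_sum_of_subset Finset.sdiff_subset)
      intro j hj
      simp at hj
      simp [hw0 j hj.2]
    · apply Finset.sum_le_sum
      intro j hj
      rw [← pow_add]
      exact Nat.pow_le_pow_right (by omega) (by have := hw j; omega)
  rw [← Finset.sum_mul] at h1
  have g1 := geo hk hm (n * t)
  have g2 := geo hk hm (n * 3)
  have p1 : 8 ≤ k ^ (n * 3) := by
    calc 8 = 2 ^ 3 := by norm_num
      _ ≤ k ^ 3 := Nat.pow_le_pow_left hk 3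
      _ ≤ k ^ (n * 3) := Nat.pow_le_pow_right (by omega) (by omega)
  have p2 : 8 * k ^ (m * (n * 3)) ≤ k ^ (m * (n * t)) := by
    calc 8 * k ^ (m * (n * 3)) ≤ k ^ 3 * k ^ (m * (n * 3)) :=
          Nat.mul_le_mul_right _ (by
            calc 8 = 2 ^ 3 := by norm_num
              _ ≤ k ^ 3 := Nat.pow_le_pow_left hk 3)
      _ = k ^ (3 + m * (n * 3)) := by rw [pow_add]
      _ ≤ _ := Nat.pow_le_pow_right (by omega) (by
          have : 1 ≤ m * n := Nat.mul_pos hm hn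
          have h6 : m * n * 6 ≤ m * n * t := Nat.mul_le_mul_left _ ht
          nlinarith)
  rw [pow_add]
  have g3 := Nat.mul_le_mul_right (k ^ (n * 3)) g2
  nlinarith [Nat.mul_le_mul_right (k ^ (m * (n * t))) p1, Nat.mul_le_mul_right (k ^ (n * 3)) p2]

theorem step {F : Type} [Field F] [Fintype F] {m n u t : ℕ} (hm : 0 < m) (hn : 0 < n)
    (ht : 6 ≤ t) {a : ℕ → Fin m → Fin n → F} (ha : Gd 3 u a) :
    2 * (Finset.univ.filter fun b : Fin ((m + n) * t) → Fin m → Fin n → F =>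
      ¬ Gd 3 (u + t) (xt a ((m + n) * u + 3) b)).card ≤
      Fintype.card F ^ (m * n * ((m + n) * t)) := by
  set k := Fintype.card F with hkdef
  have hk : 2 ≤ k := Fintype.one_lt_card
  set P := k ^ (m * n * ((m + n) * t)) with hP
  let w : ℕ → ℕ := fun j => rk a (n * u + j + 1) (m * u + 3 - j)
  have hr := rk_of_Gd ha
  have hw : ∀ j, w j ≤ n * 3 := fun j => by
    rw [← hr]; exact rk_mono a (by omega) (by omega)
  have hw0 : ∀ j, n * 3 ≤ j → w j = 0 := by
    intro j hj
    by_cases h : j ≤ m * u + 3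
    · exact rk_zero a (r := n * u) (S := m * u + 3) (i := j) (by omega) (by omega) (by omega)
    · have := rk_add_rank a (n * u + j + 1) (m * u + 3 - j)
      have h0 : m * u + 3 - j = 0 := by omega
      simp only [w]
      rw [h0] at this ⊢
      omega
  let Q : (j : ℕ) → Finset (Fin (n * u + j + 1) → Fin m → F) := fun j =>
    Finset.univ.filter fun q => ∀ l < m * u + 3 - j, ∀ ν, dig q a l ν = 0
  let Q' : (j : ℕ) → Finset (Fin (n * u + j + 1) → Fin m → F) := fun j =>
    (Q j).filter fun q => q (Fin.last _) ≠ 0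
  let B : (j : ℕ) → (Fin (n * u + j + 1) → Fin m → F) →
      Finset (Fin ((m + n) * t) → Fin m → Fin n → F) := fun j q =>
    Finset.univ.filter fun b => ∀ l < m * (u + t) + 3, ∀ ν,
      dig q (xt a ((m + n) * u + 3) b) l ν = 0
  set bad := Finset.univ.filter fun b : Fin ((m + n) * t) → Fin m → Fin n → F =>
      ¬ Gd 3 (u + t) (xt a ((m + n) * u + 3) b) with hbad
  have hsub : bad ⊆ (Finset.range (n * t)).biUnion fun j => (Q' j).biUnion (B j) := by
    intro b hb
    simp only [hbad, Finset.mem_filter, Finset.mem_univ, true_and] at hb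
    obtain ⟨j, hj, q, q1, q2, q3⟩ := bad_exists ha b hb
    simp only [Finset.mem_biUnion, Finset.mem_range]
    refine ⟨j, hj, q, ?_, ?_⟩
    · simp only [Q', Q, Finset.mem_filter, Finset.mem_univ, true_and]
      exact ⟨q1, q2⟩
    · simp only [B, Finset.mem_filter, Finset.mem_univ, true_and]
      exact q3
  set T := n * (m * (u + t) + 3) with hT
  have hj : ∀ j ∈ Finset.range (n * t), ((Q' j).biUnion (B j)).card * k ^ T ≤
      k ^ (m * (n * u)) * k ^ (m * (j + 1) + w j) * P := by
    intro j hj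
    rw [Finset.mem_range] at hj
    have hle : m * u + 3 - j ≤ m * (u + t) + 3 := by
      have : m * (u + t) = m * u + m * t := by ring
      omega
    have hTs : T = n * (m * (u + t) + 3 - (m * u + 3 - j)) + n * (m * u + 3 - j) := by
      rw [← mul_add, hT, Nat.sub_add_cancel hle]
    calc ((Q' j).biUnion (B j)).card * k ^ T ≤ (∑ q ∈ Q' j, (B j q).card) * k ^ T :=
          Nat.mul_le_mul_right _ Finset.card_biUnion_le
      _ = (∑ q ∈ Q' j, (B j q).card * k ^ (n * (m * (u + t) + 3 - (m * u + 3 - j)))) *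
            k ^ (n * (m * u + 3 - j)) := by
          rw [hTs, pow_add, ← mul_assoc, Finset.sum_mul]
      _ ≤ (∑ q ∈ Q' j, P) * k ^ (n * (m * u + 3 - j)) := by
          apply Nat.mul_le_mul_right
          apply Finset.sum_le_sum
          intro q hq
          have hq2 := (Finset.mem_filter.1 hq).2
          have hexp : (m + n) * u = m * u + n * u := by ring
          have hexp2 : (m + n) * t = m * t + n * t := by ring
          have hexp3 : m * (u + t) = m * u + m * t := by ring
          have := prob (M := (m + n) * t) a (N := (m + n) * u + 3) (d := n * u + j)
            (lo := m * u + 3 - j) (hi := m * (u + t) + 3) q hq2 (by omega) (by omega)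
          rw [Nat.card_eq_fintype_card, Fintype.card_subtype] at this
          exact this
      _ = (Q' j).card * k ^ (n * (m * u + 3 - j)) * P := by
          rw [Finset.sum_const, smul_eq_mul]; ring
      _ ≤ (Q j).card * k ^ (n * (m * u + 3 - j)) * P := by
          gcongr; exact Finset.filter_subset _ _
      _ = k ^ (m * (n * u)) * k ^ (m * (j + 1) + w j) * P := by
          have := card_left a (n * u + j + 1) (m * u + 3 - j)
          rw [Nat.card_eq_fintype_card, Fintype.card_subtype] at this
          rw [← pow_add]
          congr 1
          refine this.trans ?_
          congr 1
          simp only [w]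
          ring
  have h1 : bad.card * k ^ T ≤ ∑ j ∈ Finset.range (n * t),
      k ^ (m * (n * u)) * k ^ (m * (j + 1) + w j) * P := by
    refine (Nat.mul_le_mul_right _ ((Finset.card_le_card hsub).trans
      Finset.card_biUnion_le)).trans ?_
    rw [Finset.sum_mul]
    exact Finset.sum_le_sum hj
  rw [← Finset.sum_mul, ← Finset.mul_sum] at h1
  have h2 := sum_bd hk hm hn ht w hw hw0
  have hTT : k ^ T = k ^ (m * (n * u)) * k ^ (m * (n * t) + n * 3) := by
    rw [← pow_add, hT]; congr 1; ring
  have hpos : 0 < k ^ T := by positivity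
  refine Nat.le_of_mul_le_mul_right ?_ hpos
  calc 2 * bad.card * k ^ T = 2 * (bad.card * k ^ T) := by ring
    _ ≤ 2 * (k ^ (m * (n * u)) * ∑ j ∈ Finset.range (n * t), k ^ (m * (j + 1) + w j) * P) := by
        rw [← Finset.sum_mul, ← mul_assoc (k ^ (m * (n * u)))]
        exact Nat.mul_le_mul_left _ h1
    _ = k ^ (m * (n * u)) * (2 * ∑ j ∈ Finset.range (n * t), k ^ (m * (j + 1) + w j)) * P := by
        rw [← Finset.sum_mul]; ring
    _ ≤ k ^ (m * (n * u)) * k ^ (m * (n * t) + n * 3) * P := by gcongr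
    _ = P * k ^ T := by rw [hTT]; ring

theorem step' {F : Type} [Field F] [Fintype F] {m n u t : ℕ} (hm : 0 < m) (hn : 0 < n)
    (ht : 6 ≤ t) {a : ℕ → Fin m → Fin n → F} (ha : Gd 3 u a) :
    Fintype.card F ^ (m * n * ((m + n) * t)) ≤ 
    2 * (Finset.univ.filter fun b : Fin ((m + n) * t) → Fin m → Fin n → F =>
      Gd 3 (u + t) (xt a ((m + n) * u + 3) b)).card := by
  have h := step hm hn ht ha
  have h2 := Finset.card_filter_add_card_filter_not
    (s := (Finset.univ : Finset (Fin ((m + n) * t) → Fin m → Fin n → F)))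
    (p := fun b => Gd 3 (u + t) (xt a ((m + n) * u + 3) b))
  have h3 : (Finset.univ : Finset (Fin ((m + n) * t) → Fin m → Fin n → F)).card =
      Fintype.card F ^ (m * n * ((m + n) * t)) := by
    rw [Finset.card_univ]
    simp only [Fintype.card_fun, Fintype.card_fin]
    rw [← pow_mul, ← pow_mul, mul_comm m n, mul_assoc n m]
  rw [h3] at h2
  omega

theorem kpos : (1 : ℝ) < (Fintype.card 𝔽 : ℝ) := by
  exact_mod_cast Fintype.one_lt_card (α := 𝔽)

theorem lnorm_nonneg (x : L 𝔽) : 0 ≤ lnorm x := by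
  unfold lnorm
  split_ifs
  · exact le_rfl
  · positivity

theorem le_lnorm {x : L 𝔽} {e : ℤ} (h : x.coeff e ≠ 0) : (Fintype.card 𝔽 : ℝ) ^ (-e) ≤ lnorm x := by
  have hx : x ≠ 0 := by rintro rfl; simp at h
  unfold lnorm
  rw [if_neg hx]
  apply zpow_le_zpow_right₀ (kpos (𝔽 := 𝔽)).le
  have := HahnSeries.order_le_of_coeff_ne_zero h
  omega

theorem lnorm_le {x : L 𝔽} {e : ℤ} (h : ∀ e' < e, x.coeff e' = 0) :
    lnorm x ≤ (Fintype.card 𝔽 : ℝ) ^ (-e) := by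
  unfold lnorm
  split_ifs with hx
  · positivity
  · apply zpow_le_zpow_right₀ (kpos (𝔽 := 𝔽)).le
    have : x.coeff x.order ≠ 0 := by
      have := HahnSeries.coeff_order_eq_zero (x := x)
      tauto
    by_contra hc
    exact this (h _ (by omega))

theorem mball_coeff {m n : ℕ} {x c : Mat 𝔽 m n} {ρ : ℝ} {N : ℕ} (hx : x ∈ mball c ρ)
    (hρ : ρ < (Fintype.card 𝔽 : ℝ) ^ (-(N : ℤ))) (i : Fin m) (ν : Fin n) {e : ℤ} (he : e ≤ N) :
    (x i ν).coeff e = (c i ν).coeff e := by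
  by_contra hc
  have h1 : (x i ν - c i ν).coeff e ≠ 0 := by
    rw [HahnSeries.coeff_sub]; exact sub_ne_zero.2 hc
  have h2 := le_lnorm h1
  have h3 : lnorm (x i ν - c i ν) ≤ mnorm (x - c) := by
    have := le_ciSup (f := fun p : Fin m × Fin n => lnorm ((x - c) p.1 p.2))
      (Set.finite_range _).bddAbove (i, ν)
    exact this
  have h4 : (Fintype.card 𝔽 : ℝ) ^ (-(N : ℤ)) ≤ (Fintype.card 𝔽 : ℝ) ^ (-e) :=
    zpow_le_zpow_right₀ (kpos (𝔽 := 𝔽)).le (by omega)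
  have h5 : mnorm (x - c) ≤ ρ := hx
  linarith

/-- series starting at exponent `o` -/
def ser (o : ℤ) (f : ℕ → 𝔽) : L 𝔽 :=
  HahnSeries.ofSuppBddBelow (fun e : ℤ => if o ≤ e then f (e - o).toNat else 0)
    (HahnSeries.forallLTEqZero_supp_BddBelow _ o (by intro e he; simp [not_le.2 he]))

theorem ser_coeff (o : ℤ) (f : ℕ → 𝔽) (e : ℤ) :
    (ser o f).coeff e = if o ≤ e then f (e - o).toNat else 0 := rfl

def toMat {m n : ℕ} (a : ℕ → Fin m → Fin n → 𝔽) : Mat 𝔽 m n :=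
  Matrix.of fun i ν => ser 1 fun l => a l i ν

theorem toMat_coeff {m n : ℕ} (a : ℕ → Fin m → Fin n → 𝔽) (i : Fin m) (ν : Fin n) (l : ℕ) :
    (toMat a i ν).coeff ((l : ℤ) + 1) = a l i ν := by
  simp [toMat, ser_coeff]

theorem vecMul_coeff {m n r : ℕ} (a : ℕ → Fin m → Fin n → 𝔽) (q : Fin m → L 𝔽)
    (hq : ∀ i, IsPoly (q i)) (hr : ∀ i, ∀ e : ℕ, r ≤ e → (q i).coeff (-(e : ℤ)) = 0) (l : ℕ)
    (ν : Fin n) :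
    (Matrix.vecMul q (toMat a) ν).coeff ((l : ℤ) + 1) =
      dig (fun (j : Fin r) i => (q i).coeff (-(j : ℤ))) a l ν := by
  have hqs : ∀ i, q i = ∑ j : Fin r, HahnSeries.single (-(j : ℤ)) ((q i).coeff (-(j : ℤ))) := by
    intro i
    ext e
    rw [HahnSeries.coeff_sum]
    rcases lt_or_ge 0 e with he | he
    · rw [hq i e he, Finset.sum_eq_zero]
      intro j _
      rw [HahnSeries.coeff_single_of_ne]; omega
    · obtain ⟨p, rfl⟩ : ∃ p : ℕ, e = -(p : ℤ) := ⟨(-e).toNat, by omega⟩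
      rcases lt_or_ge p r with hp | hp
      · rw [Finset.sum_eq_single ⟨p, hp⟩]
        · simp
        · intro j _ hj
          rw [HahnSeries.coeff_single_of_ne]
          intro h
          apply hj
          ext; simp at h; simp [h]
        · simp
      · rw [hr i p hp, Finset.sum_eq_zero]
        intro j _
        rw [HahnSeries.coeff_single_of_ne]; omega
  unfold dig
  rw [Finset.sum_comm]
  simp only [Matrix.vecMul, dotProduct]
  rw [HahnSeries.coeff_sum]
  apply Finset.sum_congr rfl
  intro i _
  conv_lhs => rw [hqs i]
  rw [Finset.sum_mul, HahnSeries.coeff_sum]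
  apply Finset.sum_congr rfl
  intro j _
  rw [HahnSeries.coeff_single_mul]
  have : (l : ℤ) + 1 - -(j : ℤ) = ((j + l : ℕ) : ℤ) + 1 := by push_cast; ring
  rw [this, toMat_coeff]

theorem exists_deg {m : ℕ} (q : Fin m → L 𝔽) (hq : ∀ i, IsPoly (q i)) (hq0 : q ≠ 0) :
    ∃ d : ℕ, (∀ i, ∀ e : ℕ, d < e → (q i).coeff (-(e : ℤ)) = 0) ∧
      ∃ i, (q i).coeff (-(d : ℤ)) ≠ 0 := by
  obtain ⟨i1, hi1⟩ := Function.ne_iff.1 hq0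
  obtain ⟨i, hi, hmin⟩ := Finset.exists_min_image
    (Finset.univ.filter fun i => q i ≠ 0) (fun i => (q i).order) ⟨i1, by simpa using hi1⟩
  simp only [Finset.mem_filter, Finset.mem_univ, true_and] at hi hmin
  have hne : (q i).coeff (q i).order ≠ 0 := by
    have := HahnSeries.coeff_order_eq_zero (x := q i)
    tauto
  have hle : (q i).order ≤ 0 := by
    by_contra h
    exact hne (hq i _ (by omega))
  refine ⟨(-(q i).order).toNat, ?_, i, ?_⟩
  · intro i' e he
    by_cases h0 : q i' = 0
    · simp [h0]
    · apply HahnSeries.coeff_eq_zero_of_lt_order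
      have := hmin i' h0
      omega
  · have : -(((-(q i).order).toNat : ℕ) : ℤ) = (q i).order := by omega
    rw [this]; exact hne

theorem bad_of_Gd {m n t : ℕ} (hn : 0 < n) (ht : 0 < t)
    (a : ℕ → Fin m → Fin n → 𝔽) (ha : ∀ i, Gd 3 (t * i) a) : toMat a ∈ Bad 𝔽 m n := by
  have hk := kpos (𝔽 := 𝔽)
  set k : ℝ := (Fintype.card 𝔽 : ℝ) with hkd
  have hk0 : 0 < k := by linarith
  refine ⟨k ^ (-((m * (n * t) + n * 3 + 1 : ℕ) : ℤ)), by positivity, ?_⟩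
  intro q hq hq0
  obtain ⟨d, hd1, i0, hd2⟩ := exists_deg q hq hq0
  have hv : k ^ d ≤ vnorm q := by
    have h1 := le_lnorm hd2
    rw [neg_neg, zpow_natCast] at h1
    exact h1.trans (le_ciSup (f := fun i => lnorm (q i)) (Set.finite_range _).bddAbove i0)
  have hnt : 0 < n * t := Nat.mul_pos hn ht
  set i := d / (n * t) + 1 with hi
  have hdi : d < n * (t * i) := by
    have := Nat.lt_mul_div_succ d hnt
    rw [← mul_assoc]; exact this
  have hdi2 : n * (t * i) ≤ d + n * t := by
    have := Nat.mul_div_le d (n * t)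
    rw [hi]
    nlinarith
  have hg := ha i (fun j i => (q i).coeff (-(j : ℤ)))
  have hex : ∃ l < m * (t * i) + 3, ∃ ν : Fin n,
      dig (fun (j : Fin (n * (t * i))) i => (q i).coeff (-(j : ℤ))) a l ν ≠ 0 := by
    by_contra hcon
    push Not at hcon
    have := congrFun (congrFun (hg hcon) ⟨d, hdi⟩) i0
    exact hd2 this
  obtain ⟨l, hl, ν, hν⟩ := hex
  rw [← vecMul_coeff a q hq (fun i e he => hd1 i e (by omega)) l ν] at hν
  have hlat : k ^ (-((m * (t * i) + 3 : ℕ) : ℤ)) ≤ latDist (Matrix.vecMul q (toMat a)) := by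
    apply le_csInf
    · exact ⟨_, 0, by intro i e _; simp, rfl⟩
    · rintro r ⟨p, hp, rfl⟩
      have h1 : (Matrix.vecMul q (toMat a) ν - p ν).coeff ((l : ℤ) + 1) ≠ 0 := by
        rw [HahnSeries.coeff_sub, hp ν _ (by omega), sub_zero]; exact hν
      have h2 := (le_lnorm h1).trans (le_ciSup (f := fun ν => lnorm
        (Matrix.vecMul q (toMat a) ν - p ν)) (Set.finite_range _).bddAbove ν)
      refine le_trans ?_ h2
      apply zpow_le_zpow_right₀ hk.le
      omega
  have h3 : k ^ (-((n * (m * (t * i) + 3) : ℕ) : ℤ)) ≤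
      latDist (Matrix.vecMul q (toMat a)) ^ n := by
    refine le_trans (le_of_eq ?_) (pow_le_pow_left₀ (by positivity) hlat n)
    rw [← zpow_natCast, ← zpow_mul]
    congr 1
    push_cast; ring
  refine lt_of_lt_of_le ?_ h3
  have h4 : k ^ (d * m) ≤ vnorm q ^ m := by
    rw [pow_mul]; exact pow_le_pow_left₀ (by positivity) hv m
  rw [div_lt_iff₀ (lt_of_lt_of_le (by positivity) h4)]
  refine lt_of_lt_of_le ?_ (mul_le_mul_of_nonneg_left h4 (by positivity))
  rw [← zpow_natCast k (d * m), ← zpow_add₀ hk0.ne']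
  apply zpow_lt_zpow_right₀ hk
  have := Nat.mul_le_mul_left m hdi2
  push_cast
  zify at this
  nlinarith

/-- weight of a cylinder -/
def Wt {m n : ℕ} (cd : ℕ → ℕ → Fin m → Fin n → 𝔽) (wt : ℕ → ℝ≥0∞) (N : ℕ)
    (a : ℕ → Fin m → Fin n → 𝔽) : ℝ≥0∞ :=
  ∑' x, if ∀ l < N, cd x l = a l then wt x else 0

theorem Wt_le {m n : ℕ} (cd : ℕ → ℕ → Fin m → Fin n → 𝔽) (wt : ℕ → ℝ≥0∞) (N : ℕ)
    (a : ℕ → Fin m → Fin n → 𝔽) : Wt cd wt N a ≤ ∑' x, wt x := by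
  unfold Wt
  refine ENNReal.tsum_le_tsum fun x => ?_
  rcases Classical.em (∀ l < N, cd x l = a l) with hx | hx
  · exact le_of_eq (if_pos hx)
  · exact le_trans (le_of_eq (if_neg hx)) bot_le

theorem tree_step {m n t u : ℕ} (hm : 0 < m) (hn : 0 < n) (ht : 6 ≤ t)
    (cd : ℕ → ℕ → Fin m → Fin n → 𝔽) (wt : ℕ → ℝ≥0∞) (a : ℕ → Fin m → Fin n → 𝔽)
    (ha : Gd 3 u a) :
    ∃ a' : ℕ → Fin m → Fin n → 𝔽, Gd 3 (u + t) a' ∧ (∀ l < (m + n) * u + 3, a' l = a l) ∧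
      Wt cd wt ((m + n) * (u + t) + 3) a' *
        (Fintype.card 𝔽 ^ (m * n * ((m + n) * t) - 1) : ℕ) ≤ Wt cd wt ((m + n) * u + 3) a := by
  set N := (m + n) * u + 3 with hN
  have hN' : (m + n) * (u + t) + 3 = N + (m + n) * t := by rw [hN]; ring
  rw [hN']
  set M := (m + n) * t with hM
  have hM0 : 0 < M := Nat.mul_pos (by omega) (by omega)
  set S := Finset.univ.filter fun b : Fin M → Fin m → Fin n → 𝔽 => Gd 3 (u + t) (xt a N b) with hS
  set k := Fintype.card 𝔽 with hk
  have hk2 : 2 ≤ k := Fintype.one_lt_card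
  have hcard : k ^ (m * n * M - 1) ≤ S.card := by
    have h1 : k ^ (m * n * M) ≤ 2 * S.card := step' hm hn ht ha
    have h2 : m * n * M = (m * n * M - 1) + 1 := by
      have : 0 < m * n * M := by positivity
      omega
    rw [h2, pow_succ] at h1
    have h3 : k ^ (m * n * M - 1) * 2 ≤ k ^ (m * n * M - 1) * k := Nat.mul_le_mul_left _ hk2
    omega
  have hne : S.Nonempty := by
    rw [← Finset.card_pos]
    exact lt_of_lt_of_le (by positivity) hcard
  obtain ⟨b, hb, hmin⟩ := Finset.exists_min_image S (fun b => Wt cd wt (N + M) (xt a N b)) hne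
  refine ⟨xt a N b, (Finset.mem_filter.1 hb).2, fun l hl => xt_lt a b hl, ?_⟩
  have hsum : ∑ b ∈ S, Wt cd wt (N + M) (xt a N b) ≤ Wt cd wt N a := by
    unfold Wt
    rw [← Summable.tsum_finsetSum (fun _ _ => ENNReal.summable)]
    apply ENNReal.tsum_le_tsum
    intro x
    by_cases hx : ∃ b ∈ S, ∀ l < N + M, cd x l = xt a N b l
    · obtain ⟨b0, hb0, hx0⟩ := hx
      rw [if_pos]
      · rw [Finset.sum_eq_single b0]
        · split_ifs <;> simp
        · intro b1 _ hne1
          rw [if_neg]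
          intro h1
          apply hne1
          ext1 p
          have h2 := (h1 (N + p) (by omega)).symm.trans (hx0 (N + p) (by omega))
          simpa [xt] using h2
        · intro h; exact absurd hb0 h
      · intro l hl
        rw [hx0 l (by omega), xt_lt a b0 hl]
    · rw [Finset.sum_eq_zero]
      · simp
      · intro b1 hb1
        rw [if_neg]
        intro h1
        exact hx ⟨b1, hb1, h1⟩
  refine le_trans ?_ hsum
  have := Finset.card_nsmul_le_sum S (fun b => Wt cd wt (N + M) (xt a N b)) _ hmin
  refine le_trans ?_ this
  rw [nsmul_eq_mul, mul_comm]
  gcongr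

theorem Gd_zero {m n : ℕ} (a : ℕ → Fin m → Fin n → 𝔽) : Gd 3 0 a := by
  intro q _
  ext1 j
  exact absurd j.2 (by simp)

theorem tree {m n t : ℕ} (hm : 0 < m) (hn : 0 < n) (ht : 6 ≤ t)
    (cd : ℕ → ℕ → Fin m → Fin n → 𝔽) (wt : ℕ → ℝ≥0∞) :
    ∃ a : ℕ → Fin m → Fin n → 𝔽, (∀ i, Gd 3 (t * i) a) ∧ 
      ∀ i, Wt cd wt ((m + n) * (t * i) + 3) a *
        ((Fintype.card 𝔽 ^ (m * n * ((m + n) * t) - 1) : ℕ) : ℝ≥0∞) ^ i ≤ ∑' x, wt x := by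
  set g : ℝ≥0∞ := ((Fintype.card 𝔽 ^ (m * n * ((m + n) * t) - 1) : ℕ) : ℝ≥0∞) with hg
  have hstep := fun (u : ℕ) (a : ℕ → Fin m → Fin n → 𝔽) (ha : Gd 3 u a) =>
    tree_step hm hn ht cd wt a ha
  choose! nx h1 h2 h3 using hstep
  let f : ℕ → (ℕ → Fin m → Fin n → 𝔽) := fun i => Nat.rec 0 (fun i a => nx (t * i) a) i
  have hf : ∀ i, f (i + 1) = nx (t * i) (f i) := fun i => rfl
  have hG : ∀ i, Gd 3 (t * i) (f i) := by
    intro i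
    induction i with
    | zero => exact Gd_zero _
    | succ i ih => rw [hf]; exact h1 _ _ ih
  let N : ℕ → ℕ := fun i => (m + n) * (t * i) + 3
  have hN : ∀ i, i < N i := by
    intro i
    have : 1 * (1 * i) ≤ (m + n) * (t * i) := by gcongr <;> omega
    simp only [N]; omega
  have hNm : Monotone N := by
    intro i j hij
    simp only [N]; gcongr
  have hag : ∀ i j, i ≤ j → ∀ l < N i, f j l = f i l := by
    intro i j hij
    induction j, hij using Nat.le_induction with
    | base => intros; rfl
    | succ j hij ih =>
      intro l hl
      rw [hf, h2 _ _ (hG j) l (lt_of_lt_of_le hl (hNm hij)), ih l hl]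
  let a : ℕ → Fin m → Fin n → 𝔽 := fun l => f l l
  have haf : ∀ i, ∀ l < N i, f i l = a l := by
    intro i l hl
    rcases le_total i l with h | h
    · exact (hag i l h l hl).symm
    · exact hag l i h l (hN l)
  refine ⟨a, fun i => Gd_congr (haf i) (hG i), ?_⟩
  have hWf : ∀ i, Wt cd wt (N i) (f i) * g ^ i ≤ ∑' x, wt x := by
    intro i
    induction i with
    | zero =>
      simp only [pow_zero, mul_one]
      exact Wt_le _ _ _ _
    | succ i ih =>
      refine le_trans ?_ ih
      have := h3 _ _ (hG i)
      rw [hf, pow_succ', ← mul_assoc]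
      gcongr
      exact this
  intro i
  have : Wt cd wt (N i) a = Wt cd wt (N i) (f i) := by
    unfold Wt
    congr 1
    ext x
    congr 1
    apply propext
    exact forall₂_congr fun l hl => by rw [haf i l hl]
  rw [show (m + n) * (t * i) + 3 = N i from rfl, this]
  exact hWf i

theorem lower {m n : ℕ} (hm : 0 < m) (hn : 0 < n) {s : ℝ} (hs0 : 0 ≤ s) (hs : s < (m : ℝ) * n) :
    hMeasure s (Bad 𝔽 m n) ≠ 0 := by
  intro h0
  have hk := kpos (𝔽 := 𝔽)
  set k : ℝ := (Fintype.card 𝔽 : ℝ) with hkd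
  have hk0 : 0 < k := by linarith
  obtain ⟨t0, ht0⟩ := exists_nat_ge (1 / ((m : ℝ) * n - s))
  set t := t0 + 6 with htd
  set M := (m + n) * t with hM
  have hM0 : 0 < M := Nat.mul_pos (by omega) (by omega)
  have hsM : s * M ≤ ((m * n * M - 1 : ℕ) : ℝ) := by
    rw [Nat.cast_sub (by have : 0 < m * n * M := by positivity
                         omega)]
    push_cast
    have h1 : (1 : ℝ) ≤ ((m : ℝ) * n - s) * t0 := by
      rw [div_le_iff₀ (by linarith)] at ht0; linarith
    have h2 : (t0 : ℝ) ≤ M := by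
      have : t0 ≤ M := by
        have : 1 * t0 ≤ (m + n) * t := by gcongr <;> omega
        omega
      exact_mod_cast this
    have h3 := mul_le_mul_of_nonneg_left h2 (by linarith : 0 ≤ (m : ℝ) * n - s)
    linarith
  set ε : ℝ := k ^ (-(s * (M + 3))) with hε
  have hε0 : 0 < ε := by positivity
  unfold hMeasure at h0
  rw [ENNReal.iSup_eq_zero] at h0
  have h1 := h0 (k ^ (-((3 : ℕ) : ℤ)))
  rw [ENNReal.iSup_eq_zero] at h1
  have h2 := h1 (by positivity)
  have h3 : (0 : ℝ≥0∞) < ENNReal.ofReal ε := by simpa using hε0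
  rw [← h2] at h3
  simp only [iInf_lt_iff] at h3
  obtain ⟨c, ρ, hρ, hcov, hlt⟩ := h3
  obtain ⟨a, ha, hW⟩ := tree (t := t) hm hn (by omega)
    (fun x l i ν => (c x i ν).coeff ((l : ℤ) + 1)) (fun x => ENNReal.ofReal (ρ x ^ s))
  have hbad := bad_of_Gd hn (by omega) a ha
  obtain ⟨x, hx⟩ := Set.mem_iUnion.1 (hcov hbad)
  obtain ⟨hρ0, hρ1⟩ := hρ x
  let N : ℕ → ℕ := fun i => (m + n) * (t * i) + 3
  have hN : ∀ i, i ≤ N i := by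
    intro i
    have : 1 * (1 * i) ≤ (m + n) * (t * i) := by gcongr <;> omega
    simp only [N]; omega
  have hex : ∃ j, k ^ (-(N j : ℤ)) ≤ ρ x := by
    obtain ⟨j, hj⟩ := exists_pow_lt_of_lt_one hρ0 (inv_lt_one_of_one_lt₀ hk)
    refine ⟨j, le_trans ?_ hj.le⟩
    rw [inv_pow, ← zpow_natCast, ← zpow_neg]
    apply zpow_le_zpow_right₀ hk.le
    have := hN j
    omega
  have hj := Nat.find_spec hex
  have hjm := fun i => Nat.find_min hex (m := i)
  rcases hjd : Nat.find hex with _ | i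
  · rw [hjd] at hj
    have : N 0 = 3 := by simp [N]
    rw [this] at hj
    exact absurd hρ1 (not_lt.2 hj)
  · rw [hjd] at hj hjm
    have hi : ρ x < k ^ (-(N i : ℤ)) := not_le.1 (hjm i (by omega))
    have hWi := hW i
    have hle : ENNReal.ofReal (ρ x ^ s) ≤
        Wt (fun x l i ν => (c x i ν).coeff ((l : ℤ) + 1)) (fun x => ENNReal.ofReal (ρ x ^ s))
          (N i) a := by
      unfold Wt
      refine le_trans ?_ (ENNReal.le_tsum x)
      rw [if_pos]
      intro l hl
      ext p ν
      show (c x p ν).coeff ((l : ℤ) + 1) = a l p ν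
      rw [← mball_coeff hx hi p ν (e := (l : ℤ) + 1) (by omega), toMat_coeff]
    have hfin : ENNReal.ofReal (ρ x ^ s) *
        ((Fintype.card 𝔽 ^ (m * n * ((m + n) * t) - 1) : ℕ) : ℝ≥0∞) ^ i < ENNReal.ofReal ε := by
      refine lt_of_le_of_lt (le_trans ?_ hWi) hlt
      gcongr
    rw [← Nat.cast_pow, ← ENNReal.ofReal_natCast, ← ENNReal.ofReal_mul (by positivity),
      ENNReal.ofReal_lt_ofReal_iff hε0] at hfin
    push_cast at hfin
    rw [← hkd, ← hM] at hfin
    have e1 : k ^ (-(s * (M * (i + 1) + 3))) ≤ ρ x ^ s := by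
      have := Real.rpow_le_rpow (by positivity) hj hs0
      refine le_trans (le_of_eq ?_) this
      rw [← Real.rpow_intCast, ← Real.rpow_mul hk0.le]
      congr 1
      simp only [N, hM]
      push_cast; ring
    have e2 : k ^ (s * M * i) ≤ (k ^ (m * n * M - 1)) ^ i := by
      rw [Real.rpow_mul_natCast hk0.le]
      apply pow_le_pow_left₀ (by positivity)
      rw [← Real.rpow_natCast]
      exact Real.rpow_le_rpow_of_exponent_le hk.le hsM
    have e3 := mul_le_mul e1 e2 (by positivity) (by positivity)
    rw [← Real.rpow_add hk0] at e3
    have e4 : -(s * (M * ((i : ℝ) + 1) + 3)) + s * M * i = -(s * (M + 3)) := by ring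
    rw [e4] at e3
    linarith

theorem upper {m n : ℕ} (hm : 0 < m) (hn : 0 < n) {s : ℝ} (hs : (m : ℝ) * n < s)
    (E : Set (Mat 𝔽 m n)) : hMeasure s E = 0 := by
  have hk := kpos (𝔽 := 𝔽)
  set k : ℝ := (Fintype.card 𝔽 : ℝ) with hkd
  have hk0 : 0 < k := by linarith
  have : Nonempty (Fin m × Fin n) := ⟨(⟨0, hm⟩, ⟨0, hn⟩)⟩
  unfold hMeasure
  simp only [ENNReal.iSup_eq_zero]
  intro δ hδ
  rw [← nonpos_iff_eq_zero]
  apply le_of_forall_gt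
  intro ε hε
  obtain ⟨ε', hε', hsum⟩ := ENNReal.exists_pos_sum_of_countable hε.ne' ℕ
  have hex : ∀ p : ℕ, ∃ N : ℕ, k ^ (-(N : ℤ)) < δ ∧
      k ^ (m * n * (p + N)) * (k ^ (-(N : ℤ))) ^ s ≤ ε' p := by
    intro p
    have hr : k ^ ((m : ℝ) * n - s) < 1 := Real.rpow_lt_one_of_one_lt_of_neg hk (by linarith)
    have hr0 : 0 ≤ k ^ ((m : ℝ) * n - s) := by positivity
    have t1 := tendsto_pow_atTop_nhds_zero_of_lt_one hr0 hr
    have t2 := tendsto_pow_atTop_nhds_zero_of_lt_one (inv_nonneg.2 hk0.le)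
      (inv_lt_one_of_one_lt₀ hk)
    have hp : 0 < (ε' p : ℝ) / k ^ (m * n * p) := div_pos (by exact_mod_cast hε' p) (by positivity)
    obtain ⟨N, h1, h2⟩ := ((t1.eventually_lt_const hp).and (t2.eventually_lt_const hδ)).exists
    refine ⟨N, ?_, ?_⟩
    · rwa [zpow_neg, zpow_natCast, ← inv_pow]
    · rw [lt_div_iff₀ (by positivity)] at h1
      refine le_trans (le_of_eq ?_) h1.le
      rw [mul_add, pow_add, ← Real.rpow_intCast, ← Real.rpow_mul hk0.le, mul_comm, mul_comm (k ^ (m * n * p)),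
        ← mul_assoc]
      congr 1
      rw [← Real.rpow_natCast, ← Real.rpow_natCast, ← Real.rpow_add hk0, ← Real.rpow_mul hk0.le]
      congr 1
      push_cast; ring
  choose N hN1 hN2 using hex
  let ι := Σ p : ℕ, (Fin (p + N p) → Fin m → Fin n → 𝔽)
  have : Infinite ι := Infinite.of_injective (fun p : ℕ => (⟨p, 0⟩ : ι)) (by
    intro p p' h
    exact congrArg Sigma.fst h)
  obtain ⟨eqv⟩ : Nonempty (ℕ ≃ ι) := by
    obtain ⟨_⟩ := nonempty_denumerable ι
    exact ⟨(Denumerable.eqv ι).symm⟩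
  let cen : ι → Mat 𝔽 m n := fun x => Matrix.of fun i ν => ser (-(x.1 : ℤ)) fun l =>
    if h : l < x.1 + N x.1 then x.2 ⟨l, h⟩ i ν else 0
  let rad : ι → ℝ := fun x => k ^ (-(N x.1 : ℤ))
  refine lt_of_le_of_lt (iInf₂_le (fun x => cen (eqv x)) (fun x => rad (eqv x))) ?_
  rw [iInf_pos, iInf_pos]
  · rw [Equiv.tsum_eq eqv (fun x => ENNReal.ofReal (rad x ^ s)), ENNReal.tsum_sigma']
    refine lt_of_le_of_lt (ENNReal.tsum_le_tsum fun p => ?_) hsum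
    simp only [rad]
    rw [tsum_fintype, Finset.sum_const, Finset.card_univ, nsmul_eq_mul,
      ← ENNReal.ofReal_natCast, ← ENNReal.ofReal_mul (by positivity)]
    rw [← ENNReal.ofReal_coe_nnreal]
    apply ENNReal.ofReal_le_ofReal
    refine le_trans (le_of_eq ?_) (hN2 p)
    congr 1
    simp only [Fintype.card_fun, Fintype.card_fin]
    push_cast
    rw [← hkd, ← pow_mul, ← pow_mul, mul_comm m n, mul_assoc]
  · intro A _
    let p : ℕ := ∑ i, ∑ ν, (-(A i ν).order).toNat
    have hp : ∀ i ν, ∀ e : ℤ, e < -(p : ℤ) → (A i ν).coeff e = 0 := by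
      intro i ν e he
      apply HahnSeries.coeff_eq_zero_of_lt_order
      have h1 : (-(A i ν).order).toNat ≤ ∑ ν, (-(A i ν).order).toNat :=
        Finset.single_le_sum (f := fun ν => (-(A i ν).order).toNat) (by simp) (Finset.mem_univ ν)
      have h2 : ∑ ν, (-(A i ν).order).toNat ≤ p :=
        Finset.single_le_sum (f := fun i => ∑ ν, (-(A i ν).order).toNat) (by simp)
          (Finset.mem_univ i)
      omega
    let x : ι := ⟨p, fun l i ν => (A i ν).coeff ((l : ℤ) - p)⟩
    refine Set.mem_iUnion.2 ⟨eqv.symm x, ?_⟩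
    simp only [Equiv.apply_symm_apply]
    show mnorm (A - cen x) ≤ rad x
    unfold mnorm
    apply ciSup_le
    rintro ⟨i, ν⟩
    apply lnorm_le
    intro e he
    show (A i ν - cen x i ν).coeff e = 0
    rw [HahnSeries.coeff_sub]
    have : (cen x i ν).coeff e = if -(p : ℤ) ≤ e then
        (if h : (e - -(p : ℤ)).toNat < p + N p then x.2 ⟨_, h⟩ i ν else 0) else 0 := rfl
    rw [this]
    have he' : e < N p := he
    split_ifs with g1 g2
    · simp only [x]
      have : (((e - -(p : ℤ)).toNat : ℕ) : ℤ) - p = e := by omega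
      rw [this, sub_self]
    · omega
    · rw [hp i ν e (by omega), sub_zero]
  · intro y
    exact ⟨by positivity, hN1 _⟩

/-- **Theorem (Statement 0).** For all positive integers `m`, `n`, the set `𝔅(m,n)` of
badly approximable systems of `m` linear forms in `n` variables over `ℒ` has
Hausdorff dimension `mn`. -/
theorem hausdorff_dimension_of_Bad (𝔽 : Type) [Field 𝔽] [Fintype 𝔽]
    (m n : ℕ) (hm : 0 < m) (hn : 0 < n) :
    hdim (Bad 𝔽 m n) = (m : ℝ) * n := by
  have hmem : ∀ s : ℝ, (m : ℝ) * n < s → s ∈ {s : ℝ | 0 ≤ s ∧ hMeasure s (Bad 𝔽 m n) = 0} :=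
    fun s hs => ⟨le_trans (by positivity) hs.le, upper hm hn hs _⟩
  apply le_antisymm
  · apply le_of_forall_gt_imp_ge_of_dense
    intro s hs
    exact csInf_le ⟨0, fun x hx => hx.1⟩ (hmem s hs)
  · apply le_csInf ⟨_, hmem ((m : ℝ) * n + 1) (by linarith)⟩
    rintro s ⟨hs0, hs⟩
    by_contra hc
    exact lower hm hn hs0 (not_le.1 hc) hs

end FSBad
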